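/- Let ω > 0 and λ > 0 with δ := |λ − ω|/ω > 0. Let Δt > 0 satisfy T := 2π/ω = M Δt for a positive integer M, Δt ≤ 2/(λ + 2ω/π), and ω Δt ≤ min(δ, 1). Define λ̃ := (2/Δt) arcsin(λ Δt/2), the trapezoidal weights η_0 = η_M = 1/2, η_n = 1 for 0 < n < M, and the discrete filter transfer function β_h(μ) := (2Δt/T) Σ_{n=0}^{M} η_n cos(μ n Δt)(cos(ω n Δt) − 1/4). Then |β_h(λ̃)| ≤ max(1 − 0.3 δ², 0.63). -/

import Mathlib

open Real Finset

/-! The trapezoidal sums are telescoping, so `β_h` has a closed form: with `a = ωΔt/2`, `x = μΔt/2`,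
`r = sin x / a` and `σ = sin a / a`,
`β_h(μ) = (3r² + σ²) / (4πr(r² - σ²)) · sin(2πx/a) · cos x`,
which is the continuous transfer factor at `μ = rω` except that `1` has become `σ`, the argument
`2πr` has become `2πx/a`, and a factor `cos x` has appeared. At `μ = λ̃` one has `r = λ/ω`, hence
`δ = |r - 1|`. The zeros of the sine at `x = a` and at `x = 0` cancel the poles of the amplitude
at `r = σ` and at `r = 0`, which bounds `β_h` near `r = σ` by `1` minus a multiple of `(r - σ)²`;
as `δ ≥ 2a` while `1 - σ ≤ a²/6`, the distance `|r - σ|` is comparable to `δ`. For `x ≥ 3a/2` the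
amplitude alone is at most `0.63`. -/

/-- The weights of the composite trapezoidal rule on the nodes `0, …, M`. -/
noncomputable def trapezoidWeight (M n : ℕ) : ℝ :=
  if n = 0 ∨ n = M then 1 / 2 else 1

/-- The discrete filter transfer function `β_h`: the composite trapezoidal rule with step `Δt` and
`M` subintervals applied to `β(μ) = (2/T) ∫₀ᵀ (cos(ωt) - 1/4) cos(μt) dt`, where `T = 2π/ω`. -/
noncomputable def discreteFilterFactor (ω Δt : ℝ) (M : ℕ) (μ : ℝ) : ℝ :=
  (2 * Δt / (2 * π / ω)) * ∑ n ∈ range (M + 1),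
    trapezoidWeight M n * cos (μ * n * Δt) * (cos (ω * n * Δt) - 1 / 4)

/-- The discrete frequency `λ̃` of a mode of continuous frequency `lam`, which solves
`sin(λ̃Δt/2) / (Δt/2) = lam` as long as `Δt ≠ 0` and `|lam * Δt| ≤ 2`. -/
noncomputable def discreteFrequency (Δt lam : ℝ) : ℝ :=
  (2 / Δt) * arcsin (lam * Δt / 2)

/-- The rational factor of the filter transfer functions: the continuous one is
`β(rω) = filterAmplitude r 1 * sin(2πr)`, and time stepping replaces `1` by `σ`. -/
noncomputable def filterAmplitude (r σ : ℝ) : ℝ :=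
  (3 * r ^ 2 + σ ^ 2) / (4 * π * r * (r ^ 2 - σ ^ 2))

/-- The closed form of `β_h(μ)` in the half-step angles `a = ωΔt/2` and `x = μΔt/2`. -/
noncomputable def reducedFilterFactor (a x : ℝ) : ℝ :=
  filterAmplitude (sin x / a) (sin a / a) * sin (2 * π * (x / a)) * cos x

section ClosedForm

theorem sum_trapezoidWeight_mul {M : ℕ} (hM : M ≠ 0) (f : ℕ → ℝ) :
    ∑ n ∈ range (M + 1), trapezoidWeight M n * f n = (∑ n ∈ range M, (f n + f (n + 1))) / 2 := by
  obtain ⟨m, rfl⟩ := Nat.exists_eq_succ_of_ne_zero hM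
  have interior : ∑ k ∈ range m, trapezoidWeight (m + 1) (k + 1) * f (k + 1) =
      ∑ k ∈ range m, f (k + 1) := by
    refine sum_congr rfl fun k hk => ?_
    rw [trapezoidWeight, if_neg (by have := mem_range.1 hk; omega), one_mul]
  have left : trapezoidWeight (m + 1) 0 = 1 / 2 := by simp [trapezoidWeight]
  have right : trapezoidWeight (m + 1) (m + 1) = 1 / 2 := by simp [trapezoidWeight]
  rw [sum_range_succ, sum_range_succ', Nat.succ_eq_add_one, interior, left, right,
    sum_add_distrib, sum_range_succ' f, sum_range_succ fun n => f (n + 1)]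
  ring

theorem sum_trapezoidWeight_mul_cos {M : ℕ} (hM : M ≠ 0) {φ : ℝ} (hφ : sin φ ≠ 0) :
    ∑ n ∈ range (M + 1), trapezoidWeight M n * cos (2 * φ * n) =
      sin (2 * φ * M) * cos φ / (2 * sin φ) := by
  have telescope (n : ℕ) : (cos (2 * φ * n) + cos (2 * φ * (n + 1 : ℕ))) * sin φ =
      (sin (2 * φ * (n + 1 : ℕ)) - sin (2 * φ * n)) * cos φ := by
    have hsucc : 2 * φ * (n + 1 : ℕ) = 2 * φ * n + 2 * φ := by push_cast; ring
    rw [hsucc, cos_add, sin_add, cos_two_mul, sin_two_mul]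
    linear_combination (-2 * sin (2 * φ * n) * cos φ) * sin_sq_add_cos_sq φ
  rw [sum_trapezoidWeight_mul hM, div_eq_div_iff two_ne_zero (by simpa using hφ)]
  calc (∑ n ∈ range M, (cos (2 * φ * n) + cos (2 * φ * (n + 1 : ℕ)))) * (2 * sin φ)
      = 2 * ∑ n ∈ range M, (cos (2 * φ * n) + cos (2 * φ * (n + 1 : ℕ))) * sin φ := by
        rw [← sum_mul]; ring
    _ = 2 * ((∑ n ∈ range M, (sin (2 * φ * (n + 1 : ℕ)) - sin (2 * φ * n))) * cos φ) := by
        simp only [telescope, sum_mul]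
    _ = sin (2 * φ * M) * cos φ * 2 := by
        rw [sum_range_sub fun n : ℕ => sin (2 * φ * n), Nat.cast_zero, mul_zero, sin_zero,
          sub_zero, mul_comm]

theorem sum_trapezoidWeight_mul_cos_mul_filter (M : ℕ) (a x : ℝ) :
    ∑ n ∈ range (M + 1), trapezoidWeight M n * cos (2 * x * n) * (cos (2 * a * n) - 1 / 4) =
      (∑ n ∈ range (M + 1), trapezoidWeight M n * cos (2 * (x + a) * n)) / 2
        + (∑ n ∈ range (M + 1), trapezoidWeight M n * cos (2 * (x - a) * n)) / 2
        - (∑ n ∈ range (M + 1), trapezoidWeight M n * cos (2 * x * n)) / 4 := by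
  simp only [sum_div]
  rw [← sum_add_distrib, ← sum_sub_distrib]
  refine sum_congr rfl fun n _ => ?_
  rw [show 2 * (x + a) * n = 2 * x * n + 2 * a * n by ring,
    show 2 * (x - a) * n = 2 * x * n - 2 * a * n by ring, cos_add, cos_sub]
  ring

theorem sin_add_mul_sin_sub (x y : ℝ) :
    sin (x + y) * sin (x - y) = sin x ^ 2 - sin y ^ 2 := by
  rw [sin_add, sin_sub]
  linear_combination sin x ^ 2 * sin_sq_add_cos_sq y - sin y ^ 2 * sin_sq_add_cos_sq x

theorem cos_div_sin_add_cos_div_sin {x y : ℝ} (h : sin x ^ 2 ≠ sin y ^ 2) :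
    cos (x + y) / sin (x + y) + cos (x - y) / sin (x - y) =
      2 * sin x * cos x / (sin x ^ 2 - sin y ^ 2) := by
  have hprod : sin (x + y) * sin (x - y) ≠ 0 := by
    rw [sin_add_mul_sin_sub]; exact sub_ne_zero.2 h
  rw [div_add_div _ _ (left_ne_zero_of_mul hprod) (right_ne_zero_of_mul hprod),
    sin_add_mul_sin_sub, ← sin_two_mul, show 2 * x = x + y + (x - y) by ring, sin_add (x + y)]
  ring

theorem sum_trapezoidWeight_mul_cos_mul_filter_eq {M : ℕ} {a x : ℝ} (hMa : M * a = π)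
    (hsin : sin x ≠ 0) (hsq : sin x ^ 2 ≠ sin a ^ 2) :
    ∑ n ∈ range (M + 1), trapezoidWeight M n * cos (2 * x * n) * (cos (2 * a * n) - 1 / 4) =
      (3 * sin x ^ 2 + sin a ^ 2) / (8 * sin x * (sin x ^ 2 - sin a ^ 2))
        * sin (2 * x * M) * cos x := by
  have hM : M ≠ 0 := by
    rintro rfl
    exact pi_ne_zero (by simpa using hMa.symm)
  have hden : sin x ^ 2 - sin a ^ 2 ≠ 0 := sub_ne_zero.2 hsq
  have hprod : sin (x + a) * sin (x - a) ≠ 0 := by rwa [sin_add_mul_sin_sub]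
  have hplus := left_ne_zero_of_mul hprod
  have hminus := right_ne_zero_of_mul hprod
  have hsin_plus : sin (2 * (x + a) * M) = sin (2 * x * M) := by
    rw [show 2 * (x + a) * M = 2 * x * M + 2 * π by rw [← hMa]; ring, sin_add_two_pi]
  have hsin_minus : sin (2 * (x - a) * M) = sin (2 * x * M) := by
    rw [show 2 * (x - a) * M = 2 * x * M - 2 * π by rw [← hMa]; ring, sin_sub_two_pi]
  rw [sum_trapezoidWeight_mul_cos_mul_filter, sum_trapezoidWeight_mul_cos hM hplus,
    sum_trapezoidWeight_mul_cos hM hminus, sum_trapezoidWeight_mul_cos hM hsin, hsin_plus,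
    hsin_minus]
  calc _ = sin (2 * x * M) * ((cos (x + a) / sin (x + a) + cos (x - a) / sin (x - a)) / 4
        - cos x / sin x / 8) := by
        field_simp
        ring
    _ = _ := by
        rw [cos_div_sin_add_cos_div_sin hsq]
        field_simp
        ring

theorem discreteFilterFactor_eq_reducedFilterFactor {ω Δt μ : ℝ} {M : ℕ} (hω : ω ≠ 0)
    (hT : 2 * π / ω = M * Δt) (hsin : sin (μ * Δt / 2) ≠ 0)
    (hsq : sin (μ * Δt / 2) ^ 2 ≠ sin (ω * Δt / 2) ^ 2) :
    discreteFilterFactor ω Δt M μ = reducedFilterFactor (ω * Δt / 2) (μ * Δt / 2) := by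
  have hMΔt : (M : ℝ) * Δt ≠ 0 := hT ▸ div_ne_zero two_pi_pos.ne' hω
  have hM : (M : ℝ) ≠ 0 := left_ne_zero_of_mul hMΔt
  have hΔt : Δt ≠ 0 := right_ne_zero_of_mul hMΔt
  have ha : ω * Δt / 2 ≠ 0 := by positivity
  have hMa : M * (ω * Δt / 2) = π := by field_simp at hT; linarith
  have hnode (ν : ℝ) (n : ℕ) : ν * n * Δt = 2 * (ν * Δt / 2) * n := by ring
  simp only [discreteFilterFactor, hnode, hT]
  generalize μ * Δt / 2 = x at *
  generalize ω * Δt / 2 = a at *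
  have hden : sin x ^ 2 - sin a ^ 2 ≠ 0 := sub_ne_zero.2 hsq
  have harg : 2 * π * (x / a) = 2 * x * M := by rw [← hMa]; field_simp
  rw [sum_trapezoidWeight_mul_cos_mul_filter_eq hMa hsin hsq, reducedFilterFactor,
    filterAmplitude, harg, ← hMa]
  field_simp
  ring

end ClosedForm

section SineEstimates

theorem abs_sub_mul_cos_mul_cos_le_abs_sin_sub_sin {x y : ℝ} (hx : x ∈ Set.Icc (-(π / 2)) (π / 2))
    (hy : y ∈ Set.Icc (-(π / 2)) (π / 2)) :
    |x - y| * (cos x * cos y) ≤ |sin x - sin y| := by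
  wlog hxy : y < x generalizing x y
  · rcases (not_lt.1 hxy).eq_or_lt with rfl | hlt
    · simp
    · rw [abs_sub_comm, abs_sub_comm (sin x), mul_comm (cos x)]
      exact this hy hx hlt
  obtain ⟨c, hc, hslope⟩ := exists_deriv_eq_slope sin hxy continuousOn_sin
    differentiable_sin.differentiableOn
  have hsin : sin x - sin y = (x - y) * cos c := by
    rw [Real.deriv_sin, eq_div_iff (sub_pos.2 hxy).ne'] at hslope
    rw [← hslope, mul_comm]
  have hmin : min (cos y) (cos x) ≤ cos c :=
    strictConcaveOn_cos_Icc.concaveOn.min_le_of_mem_Icc hy hx ⟨hc.1.le, hc.2.le⟩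
  have hcos : cos x * cos y ≤ cos c := by
    refine le_trans (le_min ?_ ?_) hmin
    · exact mul_le_of_le_one_left (cos_nonneg_of_mem_Icc hy) (cos_le_one x)
    · exact mul_le_of_le_one_right (cos_nonneg_of_mem_Icc hx) (cos_le_one y)
  calc |x - y| * (cos x * cos y) ≤ |x - y| * |cos c| := by
        gcongr; exact hcos.trans (le_abs_self _)
    _ = |sin x - sin y| := by rw [hsin, abs_mul]

theorem abs_sin_two_pi_mul_le {u : ℝ} (hu : |u| ≤ 1 / 2) :
    |sin (2 * π * u)| ≤ 2 * π * |u| * (1 - 2 * |u| ^ 2) := by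
  have habs : |π * u| = π * |u| := by rw [abs_mul, abs_of_pos pi_pos]
  have hle : |π * u| ≤ π / 2 := by rw [habs]; nlinarith [pi_pos]
  have hsin : |sin (π * u)| ≤ π * |u| := habs ▸ abs_sin_le_abs
  have hcos : cos (π * u) ≤ 1 - 2 * |u| ^ 2 := by
    calc cos (π * u) ≤ 1 - 2 / π ^ 2 * (π * u) ^ 2 :=
          cos_le_one_sub_mul_cos_sq (hle.trans (by linarith [pi_pos]))
      _ = 1 - 2 * |u| ^ 2 := by rw [sq_abs]; field_simp
  have hcos₀ : 0 ≤ cos (π * u) := cos_nonneg_of_mem_Icc (abs_le.1 hle)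
  calc |sin (2 * π * u)| = 2 * |sin (π * u)| * cos (π * u) := by
        rw [mul_assoc, sin_two_mul, abs_mul, abs_mul, abs_two, abs_of_nonneg hcos₀]
    _ ≤ 2 * (π * |u|) * (1 - 2 * |u| ^ 2) := by gcongr
    _ = 2 * π * |u| * (1 - 2 * |u| ^ 2) := by ring

theorem abs_sin_two_pi_mul_mul_cos_mul_cos_le {a x y : ℝ} (ha : 0 < a)
    (hx : x ∈ Set.Icc (-(π / 2)) (π / 2)) (hy : y ∈ Set.Icc (-(π / 2)) (π / 2))
    (hxy : |x - y| ≤ a / 2) :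
    |sin (2 * π * ((x - y) / a))| * (cos x * cos y) ≤
      2 * π * |(sin x - sin y) / a| * (1 - 2 * |(sin x - sin y) / a| ^ 2) := by
  set u := (x - y) / a
  set w := (sin x - sin y) / a
  set k := cos x * cos y
  have hk : 0 ≤ k := mul_nonneg (cos_nonneg_of_mem_Icc hx) (cos_nonneg_of_mem_Icc hy)
  have hu : |u| ≤ 1 / 2 := by
    rw [abs_div, abs_of_pos ha, div_le_iff₀ ha]; linarith
  have huw : |u| * k ≤ |w| := by
    rw [abs_div, abs_div, abs_of_pos ha, div_mul_eq_mul_div]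
    gcongr
    exact abs_sub_mul_cos_mul_cos_le_abs_sin_sub_sin hx hy
  have hwu : |w| ≤ |u| := by
    rw [abs_div, abs_div]
    gcongr ?_ / _
    exact Real.abs_sin_sub_sin_le x y
  have hfactor : 0 ≤ 1 - 2 * |u| ^ 2 := by nlinarith [abs_nonneg u]
  calc |sin (2 * π * u)| * k ≤ 2 * π * |u| * (1 - 2 * |u| ^ 2) * k := by
        gcongr; exact abs_sin_two_pi_mul_le hu
    _ = 2 * π * (|u| * k) * (1 - 2 * |u| ^ 2) := by ring
    _ ≤ 2 * π * |w| * (1 - 2 * |w| ^ 2) := by gcongr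

theorem sub_cube_le_sin_div {a c x : ℝ} (ha : 0 < a) (hc : 0 < c) (hcx : c * a ≤ x)
    (hx : x ≤ π / 2) : c - c ^ 3 * a ^ 2 / 6 ≤ sin x / a := by
  have hca : 0 < c * a := mul_pos hc ha
  rw [le_div_iff₀ ha]
  calc (c - c ^ 3 * a ^ 2 / 6) * a = c * a - (c * a) ^ 3 / 6 := by ring
    _ ≤ sin (c * a) := (sin_gt_sub_cube hca).le
    _ ≤ sin x := sin_le_sin_of_le_of_le_pi_div_two (by linarith [pi_pos]) hx hcx

theorem sin_div_self_le_one {a : ℝ} (ha : 0 < a) : sin a / a ≤ 1 :=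
  (div_le_one ha).2 (sin_le ha.le)

theorem one_sub_sq_div_six_le_sin_div {a : ℝ} (ha : 0 < a) : 1 - a ^ 2 / 6 ≤ sin a / a := by
  rw [le_div_iff₀ ha]
  linarith [sin_gt_sub_cube ha]

theorem mul_abs_sub_one_le_abs_sub_sin_div {a r : ℝ} (ha : 0 < a) (ha2 : a ≤ 1 / 2)
    (hsep : 2 * a ≤ |r - 1|) : 15 / 16 * |r - 1| ≤ |r - sin a / a| := by
  have hσ := one_sub_sq_div_six_le_sin_div ha
  have htri := abs_sub_le r (sin a / a) 1
  rw [abs_sub_comm (sin a / a), abs_of_nonneg (sub_nonneg.2 (sin_div_self_le_one ha))] at htri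
  nlinarith

theorem ne_sin_div_of_two_mul_le {a r : ℝ} (ha : 0 < a) (ha2 : a ≤ 1 / 2) (hsep : 2 * a ≤ |r - 1|) :
    r ≠ sin a / a := by
  have hgap := mul_abs_sub_one_le_abs_sub_sin_div ha ha2 hsep
  exact sub_ne_zero.1 (abs_pos.1 (by linarith))

end SineEstimates

section Amplitude

theorem abs_filterAmplitude_eq {r σ : ℝ} (hr : 0 < r) (hσ : 0 < σ) :
    |filterAmplitude r σ| =
      (1 + |r - σ| ^ 2 / (2 * r * (r + σ))) / (2 * π * |r - σ|) := by
  have hden : |4 * π * r * (r ^ 2 - σ ^ 2)| = 4 * π * r * (r + σ) * |r - σ| := by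
    rw [show 4 * π * r * (r ^ 2 - σ ^ 2) = 4 * π * r * (r + σ) * (r - σ) by ring, abs_mul,
      abs_of_pos (by positivity)]
  rw [filterAmplitude, abs_div, hden, abs_of_pos (by positivity)]
  field_simp
  rw [sq_abs]
  ring

theorem abs_filterAmplitude_of_lt {r σ : ℝ} (hr : 0 < r) (hrσ : r < σ) :
    |filterAmplitude r σ| = (3 * r ^ 2 + σ ^ 2) / (4 * π * r * (σ ^ 2 - r ^ 2)) := by
  have hgap : 0 < σ ^ 2 - r ^ 2 := sub_pos.2 (pow_lt_pow_left₀ hrσ hr.le two_ne_zero)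
  rw [filterAmplitude, abs_div, abs_mul, abs_sub_comm, abs_of_pos hgap,
    abs_of_pos (by positivity), abs_of_pos (by positivity)]

theorem abs_filterAmplitude_le {r σ : ℝ} (hr : 1.28 ≤ r) (hσ : 0 ≤ σ) (hσ1 : σ ≤ 1) :
    |filterAmplitude r σ| ≤ 0.63 := by
  have hσ2 : σ ^ 2 ≤ 1 := pow_le_one₀ hσ hσ1
  have hr2 : 0 < r ^ 2 - 1 := by nlinarith
  have hden : 4 * 3.14 * r * (r ^ 2 - 1) ≤ 4 * π * r * (r ^ 2 - σ ^ 2) := by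
    gcongr
    exact pi_gt_d2.le
  have hden₀ : 0 < 4 * 3.14 * r * (r ^ 2 - 1) := by positivity
  rw [filterAmplitude, abs_of_nonneg (div_nonneg (by positivity) (hden₀.le.trans hden))]
  calc (3 * r ^ 2 + σ ^ 2) / (4 * π * r * (r ^ 2 - σ ^ 2))
      ≤ (3 * r ^ 2 + 1) / (4 * 3.14 * r * (r ^ 2 - 1)) := by gcongr
    _ ≤ 0.63 := by
      rw [div_le_iff₀ hden₀]
      nlinarith [mul_nonneg (sub_nonneg.2 hr) (sq_nonneg r),
        mul_nonneg (sub_nonneg.2 hr) (sub_nonneg.2 hr)]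

end Amplitude

section ReducedBounds

variable {a x : ℝ}

theorem abs_reducedFilterFactor (hx : x ∈ Set.Icc (-(π / 2)) (π / 2)) :
    |reducedFilterFactor a x| =
      |sin (2 * π * (x / a))| * cos x * |filterAmplitude (sin x / a) (sin a / a)| := by
  rw [reducedFilterFactor, abs_mul, abs_mul, abs_of_nonneg (cos_nonneg_of_mem_Icc hx)]
  ring

theorem abs_reducedFilterFactor_le_of_le_half (ha : 0 < a) (ha2 : a ≤ 1 / 2) (hx : 0 < x)
    (hxa : x ≤ a / 2) : |reducedFilterFactor a x| ≤ 0.7 := by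
  have hxπ : x ∈ Set.Icc (-(π / 2)) (π / 2) := by constructor <;> linarith [pi_gt_three]
  have h0π : (0 : ℝ) ∈ Set.Icc (-(π / 2)) (π / 2) := by constructor <;> linarith [pi_pos]
  have hsine := abs_sin_two_pi_mul_mul_cos_mul_cos_le ha hxπ h0π
    (by rwa [sub_zero, abs_of_pos hx])
  rw [abs_reducedFilterFactor hxπ]
  have hσ : 15 / 16 ≤ sin a / a := by nlinarith [one_sub_sq_div_six_le_sin_div ha]
  have hr₀ : 0 < sin x / a := div_pos (sin_pos_of_pos_of_lt_pi hx (by linarith [pi_gt_three])) ha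
  have hr : sin x / a ≤ 1 / 2 := by
    rw [div_le_iff₀ ha]; linarith [sin_le hx.le]
  simp only [sin_zero, cos_zero, sub_zero, mul_one, abs_of_pos hr₀] at hsine
  generalize sin x / a = r at *
  generalize sin a / a = σ at *
  have hgap : 0 < σ ^ 2 - r ^ 2 := by nlinarith
  calc |sin (2 * π * (x / a))| * cos x * |filterAmplitude r σ|
      ≤ 2 * π * r * (1 - 2 * r ^ 2) * |filterAmplitude r σ| := by gcongr
    _ = (1 - 2 * r ^ 2) * (3 * r ^ 2 + σ ^ 2) / (2 * (σ ^ 2 - r ^ 2)) := by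
      rw [abs_filterAmplitude_of_lt hr₀ (by linarith)]; field_simp; ring
    _ ≤ 0.7 := by
      have hσsq : 225 / 256 ≤ σ ^ 2 := by nlinarith
      rw [div_le_iff₀ (by positivity)]
      nlinarith [sq_nonneg (r ^ 2 - 11 / 50), mul_nonneg (sq_nonneg r) (sub_nonneg.2 hσsq)]

/-- The loss of a factor `cos a` on the left makes the estimate symmetric in `x` and `a`, so that
`x < a` and `x > a` need no separate treatment. -/
theorem abs_reducedFilterFactor_mul_cos_le (ha : 0 < a) (ha2 : a ≤ 1 / 2) (hxa : |x - a| ≤ a / 2)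
    (hrσ : sin x / a ≠ sin a / a) :
    |reducedFilterFactor a x| * cos a ≤ 1 - 1.2 * |sin x / a - sin a / a| ^ 2 := by
  obtain ⟨hlow, hupp⟩ := abs_le.1 hxa
  have hxπ : x ∈ Set.Icc (-(π / 2)) (π / 2) := by constructor <;> linarith [pi_gt_three]
  have haπ : a ∈ Set.Icc (-(π / 2)) (π / 2) := by constructor <;> linarith [pi_gt_three]
  have hsine := abs_sin_two_pi_mul_mul_cos_mul_cos_le ha hxπ haπ hxa
  have hshift : sin (2 * π * ((x - a) / a)) = sin (2 * π * (x / a)) := by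
    rw [← sin_sub_two_pi (2 * π * (x / a))]; congr 1; field_simp
  rw [abs_reducedFilterFactor hxπ]
  rw [hshift, sub_div] at hsine
  have hσ : 15 / 16 ≤ sin a / a := by nlinarith [one_sub_sq_div_six_le_sin_div ha]
  have hr : 0.49 ≤ sin x / a := by
    nlinarith [sub_cube_le_sin_div (c := 1 / 2) ha (by norm_num) (by linarith) hxπ.2]
  have hw : |sin x / a - sin a / a| ≤ 1 / 2 := by
    rw [← sub_div, abs_div, abs_of_pos ha, div_le_iff₀ ha]
    linarith [Real.abs_sin_sub_sin_le x a]
  generalize sin x / a = r at *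
  generalize sin a / a = σ at *
  rw [abs_filterAmplitude_eq (by linarith) (by linarith)]
  have hw₀ : 0 < |r - σ| := abs_pos.2 (sub_ne_zero.2 hrσ)
  set w := |r - σ|
  have hD : 4 / 3 ≤ 2 * r * (r + σ) := by nlinarith
  have hfactor : 0 ≤ 1 - 2 * w ^ 2 := by nlinarith
  calc |sin (2 * π * (x / a))| * cos x * ((1 + w ^ 2 / (2 * r * (r + σ))) / (2 * π * w)) * cos a
      = |sin (2 * π * (x / a))| * (cos x * cos a) *
          ((1 + w ^ 2 / (2 * r * (r + σ))) / (2 * π * w)) := by ring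
    _ ≤ 2 * π * w * (1 - 2 * w ^ 2) * ((1 + w ^ 2 / (4 / 3)) / (2 * π * w)) := by
      gcongr
    _ = (1 - 2 * w ^ 2) * (1 + w ^ 2 / (4 / 3)) := by field_simp
    _ ≤ 1 - 1.2 * w ^ 2 := by nlinarith [sq_nonneg (w ^ 2), sq_nonneg w]

theorem abs_reducedFilterFactor_le_of_abs_sub_le (ha : 0 < a) (ha2 : a ≤ 1 / 2)
    (hxa : |x - a| ≤ a / 2) (hsep : 2 * a ≤ |sin x / a - 1|) :
    |reducedFilterFactor a x| ≤ 1 - 0.3 * |sin x / a - 1| ^ 2 := by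
  have hgap := mul_abs_sub_one_le_abs_sub_sin_div ha ha2 hsep
  have hmain := abs_reducedFilterFactor_mul_cos_le ha ha2 hxa (ne_sin_div_of_two_mul_le ha ha2 hsep)
  have hcos : 1 - a ^ 2 / 2 ≤ cos a := one_sub_sq_div_two_le_cos
  set d := |sin x / a - 1|
  have hB : 0 ≤ |reducedFilterFactor a x| := abs_nonneg _
  have hcos₀ : 0 < cos a := by nlinarith
  have hmain' : |reducedFilterFactor a x| * cos a ≤ 1 - d ^ 2 := by nlinarith
  have hd1 : d ^ 2 ≤ 1 := by linarith [mul_nonneg hB hcos₀.le]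
  have hcosd : 1 - d ^ 2 / 8 ≤ cos a := by nlinarith
  refine le_of_mul_le_mul_right ?_ hcos₀
  calc |reducedFilterFactor a x| * cos a ≤ 1 - d ^ 2 := hmain'
    _ ≤ (1 - 0.3 * d ^ 2) * (1 - d ^ 2 / 8) := by nlinarith [sq_nonneg d]
    _ ≤ (1 - 0.3 * d ^ 2) * cos a := by gcongr; linarith

theorem abs_reducedFilterFactor_le_of_three_halves_le (ha : 0 < a) (ha2 : a ≤ 1 / 2)
    (hax : 3 / 2 * a ≤ x) (hx : x ≤ π / 2) : |reducedFilterFactor a x| ≤ 0.63 := by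
  have hr : 1.28 ≤ sin x / a := by
    nlinarith [sub_cube_le_sin_div ha (by norm_num) hax hx]
  have hσ : 0 ≤ sin a / a :=
    div_nonneg (sin_nonneg_of_nonneg_of_le_pi ha.le (by linarith [pi_gt_three])) ha.le
  calc |reducedFilterFactor a x|
      = |filterAmplitude (sin x / a) (sin a / a)| * |sin (2 * π * (x / a))| * |cos x| := by
        rw [reducedFilterFactor, abs_mul, abs_mul]
    _ ≤ 0.63 * 1 * 1 := by
        gcongr
        · exact abs_filterAmplitude_le hr hσ (sin_div_self_le_one ha)
        · exact abs_sin_le_one _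
        · exact abs_cos_le_one _
    _ = 0.63 := by norm_num

theorem abs_reducedFilterFactor_le_max (ha : 0 < a) (ha2 : a ≤ 1 / 2) (hx : 0 < x) (hxπ : x ≤ π / 2)
    (hsep : 2 * a ≤ |sin x / a - 1|) :
    |reducedFilterFactor a x| ≤ max (1 - 0.3 * |sin x / a - 1| ^ 2) 0.63 := by
  rcases le_total x (a / 2) with hlow | hlow
  · have hr : |sin x / a - 1| ≤ 1 := by
      have hr₀ : 0 ≤ sin x / a :=
        div_nonneg (sin_nonneg_of_nonneg_of_le_pi hx.le (by linarith [pi_pos])) ha.le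
      have hr1 : sin x / a ≤ 1 := by rw [div_le_one ha]; linarith [sin_le hx.le]
      exact abs_le.2 ⟨by linarith, by linarith⟩
    refine le_max_of_le_left ((abs_reducedFilterFactor_le_of_le_half ha ha2 hx hlow).trans ?_)
    nlinarith [abs_nonneg (sin x / a - 1)]
  rcases le_total x (3 / 2 * a) with hupp | hupp
  · exact le_max_of_le_left (abs_reducedFilterFactor_le_of_abs_sub_le ha ha2
      (abs_le.2 ⟨by linarith, by linarith⟩) hsep)
  · exact le_max_of_le_right (abs_reducedFilterFactor_le_of_three_halves_le ha ha2 hupp hxπ)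

end ReducedBounds

theorem discrete_filter_factor_bound_general {ω lam Δt : ℝ} {M : ℕ} (hω : 0 < ω) (hlam : 0 < lam)
    (hT : 2 * π / ω = M * Δt) (hstable : lam * Δt ≤ 2) (hsmall : ω * Δt ≤ min (|lam - ω| / ω) 1) :
    |discreteFilterFactor ω Δt M (discreteFrequency Δt lam)| ≤
      max (1 - 0.3 * (|lam - ω| / ω) ^ 2) 0.63 := by
  have hΔt : 0 < Δt :=
    pos_of_mul_pos_right (hT ▸ div_pos two_pi_pos hω) M.cast_nonneg
  obtain ⟨hsep, hle⟩ := le_min_iff.1 hsmall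
  have hx : discreteFrequency Δt lam * Δt / 2 = arcsin (lam * Δt / 2) := by
    rw [discreteFrequency]; field_simp
  have hsin : sin (arcsin (lam * Δt / 2)) = lam * Δt / 2 :=
    sin_arcsin (by linarith [mul_pos hlam hΔt]) (by linarith)
  have ha : 0 < ω * Δt / 2 := by positivity
  have hsin_pos : 0 < sin (arcsin (lam * Δt / 2)) := by rw [hsin]; positivity
  have hr : sin (arcsin (lam * Δt / 2)) / (ω * Δt / 2) = lam / ω := by rw [hsin]; field_simp
  have hδ : |lam - ω| / ω = |lam / ω - 1| := by
    rw [div_sub_one hω.ne', abs_div, abs_of_pos hω]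
  rw [hδ, ← hr] at hsep ⊢
  have hsep' := (mul_div_cancel₀ (ω * Δt) (two_ne_zero' ℝ)).trans_le hsep
  have hsin_ne := ne_sin_div_of_two_mul_le ha (by linarith) hsep'
  have hsina_pos : 0 < sin (ω * Δt / 2) :=
    sin_pos_of_pos_of_lt_pi ha (by linarith [pi_gt_three])
  rw [discreteFilterFactor_eq_reducedFilterFactor hω.ne' hT (by rw [hx]; exact hsin_pos.ne'), hx]
  · exact abs_reducedFilterFactor_le_max ha (by linarith) (arcsin_pos.2 (by positivity))
      (arcsin_le_pi_div_two _) hsep'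
  · rw [hx, Ne, sq_eq_sq₀ hsin_pos.le hsina_pos.le]
    exact fun h => hsin_ne (by rw [h])

/-- Bound on the discrete filter transfer factor `β_h(λ̃)` used to prove
convergence of the discrete EM-WaveHoltz iteration. -/
theorem discrete_filter_factor_bound
    (ω lam : ℝ) (hω : 0 < ω) (hlam : 0 < lam)
    (δ : ℝ) (hδ : δ = |lam - ω| / ω) (hδ_pos : 0 < δ)
    (Δt : ℝ) (hΔt : 0 < Δt)
    (M : ℕ) (hM : 0 < M) (hT : 2 * π / ω = (M : ℝ) * Δt)
    (hCFL : Δt ≤ 2 / (lam + 2 * ω / π))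
    (hsmall : ω * Δt ≤ min δ 1)
    (lamt : ℝ) (hlamt : lamt = (2 / Δt) * Real.arcsin (lam * Δt / 2))
    (η : ℕ → ℝ) (hη : ∀ n, η n = if n = 0 ∨ n = M then (1 / 2 : ℝ) else 1)
    (βh : ℝ → ℝ)
    (hβh : ∀ μ, βh μ = (2 * Δt / (2 * π / ω)) *
      ∑ n ∈ Finset.range (M + 1),
        η n * Real.cos (μ * n * Δt) * (Real.cos (ω * n * Δt) - 1 / 4)) :
    |βh lamt| ≤ max (1 - 0.3 * δ ^ 2) 0.63 := by
  obtain rfl : η = trapezoidWeight M := funext hη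
  obtain rfl : βh = discreteFilterFactor ω Δt M := funext hβh
  subst hδ hlamt
  have hstable : lam * Δt ≤ 2 := by
    rw [← le_div_iff₀' hlam]
    exact hCFL.trans (by gcongr; exact le_add_of_nonneg_right (by positivity))
  exact discrete_filter_factor_bound_general hω hlam hT hstable hsmall
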